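/- Let a < b be real numbers and let f : ℝ → ℂ be an exponential polynomial, i.e. f(t) = Σ_{k=1}^{m} p_k(t)·e^{λ_k t} for finitely many polynomials p_k ∈ ℂ[X] and complex numbers λ_k. Suppose that for every n ∈ ℕ there exists a function g_n integrable on (a,b) such that f(t) = (I_a^[n] g_n)(t) for almost every t ∈ (a,b). Then f(t) = 0 for every t ∈ (a,b). -/

import Mathlib

/-!
The function `f` is real analytic. If it is not identically zero, it factors near `a` as
`f t = (t - a) ^ k • h t` with `h` analytic and `h a ≠ 0`. On the other hand an `(n + 1)`-fold
indefinite integral from `a` of an integrable function is `O((t - a) ^ n)` on `(a, b)`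
(`norm_iterate_indefInt_le`). Taking `n = k + 1` gives `‖h t‖ ≤ C (t - a)` for almost every `t`
near `a`, which contradicts `h a ≠ 0`. Hence `f` vanishes near `a`, and therefore everywhere by the
identity theorem.
-/

open MeasureTheory Polynomial

/-- The indefinite-integral operator `(I_a g)(t) = ∫_a^t g(s) ds` for complex-valued `g`. -/
noncomputable def indefInt (a : ℝ) (g : ℝ → ℂ) : ℝ → ℂ := fun t => ∫ s in a..t, g s

theorem norm_iterate_indefInt_le {a b : ℝ} {g : ℝ → ℂ} (hg : IntegrableOn g (Set.Ioo a b))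
    (n : ℕ) : ∀ t ∈ Set.Ioo a b,
      ‖(indefInt a)^[n + 1] g t‖ ≤ (∫ s in Set.Ioo a b, ‖g s‖) * (t - a) ^ n := by
  induction n with
  | zero =>
    intro t ht
    simp only [zero_add, Function.iterate_one, pow_zero, mul_one, indefInt]
    refine (intervalIntegral.norm_integral_le_integral_norm_uIoc).trans ?_
    rw [Set.uIoc_of_le ht.1.le]
    exact setIntegral_mono_set hg.norm (Filter.Eventually.of_forall fun _ => norm_nonneg _)
      (LE.le.eventuallyLE fun s hs => ⟨hs.1, hs.2.trans_lt ht.2⟩)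
  | succ n ih =>
    intro t ht
    rw [Function.iterate_succ_apply']
    have hC : 0 ≤ ∫ s in Set.Ioo a b, ‖g s‖ := integral_nonneg fun _ => norm_nonneg _
    have key := intervalIntegral.norm_integral_le_of_norm_le_const (a := a) (b := t)
      (f := (indefInt a)^[n + 1] g) (C := (∫ s in Set.Ioo a b, ‖g s‖) * (t - a) ^ n) ?_
    · rw [abs_of_pos (sub_pos.2 ht.1), mul_assoc, ← pow_succ] at key
      exact key
    · intro s hs
      rw [Set.uIoc_of_le ht.1.le] at hs
      refine (ih s ⟨hs.1, hs.2.trans_lt ht.2⟩).trans ?_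
      have h0 : 0 ≤ s - a := sub_nonneg.2 hs.1.le
      have h1 : s - a ≤ t - a := sub_le_sub_right hs.2 a
      gcongr

theorem analyticAt_exponential_polynomial {m : ℕ} (p : Fin m → Polynomial ℂ) (lam : Fin m → ℂ)
    (x : ℝ) :
    AnalyticAt ℝ (fun t : ℝ => ∑ k, (p k).eval (t : ℂ) * Complex.exp (lam k * t)) x := by
  have hof : AnalyticAt ℝ (fun t : ℝ => (t : ℂ)) x := Complex.ofRealCLM.analyticAt x
  refine Finset.analyticAt_fun_sum _ fun k _ => ?_
  have hF : AnalyticAt ℂ (fun z : ℂ => (p k).eval z * Complex.exp (lam k * z)) (x : ℂ) :=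
    (AnalyticOnNhd.eval_polynomial (p k) _ (Set.mem_univ _)).mul
      (analyticAt_const.mul analyticAt_id).cexp
  exact (hF.restrictScalars (𝕜 := ℝ)).comp hof

/-- If an exponential polynomial `f(t) = Σ_k p_k(t)·e^{λ_k t}` is, for every
`n ∈ ℕ`, a.e. on `(a,b)` equal to the `n`-fold indefinite integral from `a` of some function
integrable on `(a,b)`, then `f` vanishes identically on `(a,b)`. -/
theorem exponential_polynomial_infinitely_integrable_eq_zero
    (a b : ℝ) (hab : a < b) (f : ℝ → ℂ)
    (m : ℕ) (p : Fin m → Polynomial ℂ) (lam : Fin m → ℂ)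
    (hf : ∀ t : ℝ, f t = ∑ k, (p k).eval (t : ℂ) * Complex.exp (lam k * t))
    (hint : ∀ n : ℕ, ∃ g : ℝ → ℂ, IntegrableOn g (Set.Ioo a b) ∧
      ∀ᵐ t ∂(volume.restrict (Set.Ioo a b)), f t = (indefInt a)^[n] g t) :
    ∀ t ∈ Set.Ioo a b, f t = 0 := by
  have han : AnalyticOnNhd ℝ f Set.univ := by
    intro x _
    rw [funext hf]
    exact analyticAt_exponential_polynomial p lam x
  suffices hz : ∀ᶠ t in nhds a, f t = 0 by
    intro t _
    exact han.eqOn_zero_of_preconnected_of_eventuallyEq_zero isPreconnected_univ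
      (Set.mem_univ a) hz (Set.mem_univ t)
  by_contra hne
  obtain ⟨k, h, hh, hha, hfac⟩ :=
    ((han a (Set.mem_univ a)).exists_eventuallyEq_pow_smul_nonzero_iff).2 hne
  obtain ⟨g, hg, hfg⟩ := hint (k + 2)
  set C := ∫ s in Set.Ioo a b, ‖g s‖ with hC
  have hlt : ∀ᶠ t in nhds a, C * (t - a) < ‖h t‖ := by
    have h1 : ContinuousAt (fun t : ℝ => C * (t - a)) a := by fun_prop
    refine h1.eventually_lt hh.continuousAt.norm ?_
    simpa using hha
  obtain ⟨ε, hε, hball⟩ := Metric.eventually_nhds_iff.1 (hfac.and hlt)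
  have hac : a < min b (a + ε) := lt_min hab (by linarith)
  have hae : ∀ᵐ t ∂(volume.restrict (Set.Ioo a (min b (a + ε)))),
      f t = (indefInt a)^[k + 2] g t :=
    ae_restrict_of_ae_restrict_of_subset (Set.Ioo_subset_Ioo_right (min_le_left _ _)) hfg
  -- The interval has positive measure, so the a.e. identity holds at some point of it.
  have : (ae (volume.restrict (Set.Ioo a (min b (a + ε))))).NeBot := by
    rw [ae_neBot, Ne, Measure.restrict_eq_zero, Real.volume_Ioo]
    simpa using hac
  obtain ⟨t, htf, ht⟩ := (hae.and (ae_restrict_mem measurableSet_Ioo)).exists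
  have htb : t < b := ht.2.trans_le (min_le_left _ _)
  have hte : t < a + ε := ht.2.trans_le (min_le_right _ _)
  have hpos : 0 < t - a := sub_pos.2 ht.1
  obtain ⟨h1, h2⟩ := hball (y := t) (by
    rw [Real.dist_eq, abs_of_pos hpos]
    linarith)
  have hb := norm_iterate_indefInt_le hg (k + 1) t ⟨ht.1, htb⟩
  rw [← htf, h1, norm_smul, norm_pow, Real.norm_of_nonneg hpos.le, ← hC] at hb
  have hk : 0 < (t - a) ^ k := pow_pos hpos k
  have h3 := mul_lt_mul_of_pos_left h2 hk
  rw [pow_succ] at hb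
  linarith
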